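/- Let G be a finite simple connected graph of order n ≥ 3 with maximum degree Δ(G). If the distinguishing chromatic index of G satisfies χ'_D(G) ≤ Δ(G) + 1, then the distinguishing chromatic index of the endline graph satisfies χ'_D(G⁺) ≤ Δ(G) + 1. -/

import Mathlib

open SimpleGraph

/-- The middle graph `M(G)`: vertices are `V(G) ⊕ E(G)`; two edges are adjacent
iff they are distinct and share an endpoint; a vertex and an edge are adjacent
iff the vertex is incident to the edge. -/
def middleGraph {V : Type*} (G : SimpleGraph V) : SimpleGraph (V ⊕ G.edgeSet) :=
  SimpleGraph.fromRel fun x y =>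
    match x, y with
    | Sum.inr e, Sum.inr f => e ≠ f ∧ ∃ v, v ∈ (e : Sym2 V) ∧ v ∈ (f : Sym2 V)
    | Sum.inl v, Sum.inr e => v ∈ (e : Sym2 V)
    | _, _ => False

/-- The subdivision graph `S(G)`: vertices are `V(G) ⊕ E(G)`; `v ∈ V(G)` and
`e ∈ E(G)` are adjacent iff `v` is incident to `e`. -/
def subdivisionGraph {V : Type*} (G : SimpleGraph V) : SimpleGraph (V ⊕ G.edgeSet) :=
  SimpleGraph.fromRel fun x y =>
    match x, y with
    | Sum.inl v, Sum.inr e => v ∈ (e : Sym2 V)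
    | _, _ => False

/-- The endline graph `G⁺`: to each vertex `v` of `G` (coded `Sum.inl v`) we attach a new
pendant vertex (coded `Sum.inr v`) via a new (endline) edge. -/
def endlineGraph {V : Type*} (G : SimpleGraph V) : SimpleGraph (V ⊕ V) :=
  SimpleGraph.fromRel fun x y =>
    match x, y with
    | Sum.inl u, Sum.inl v => G.Adj u v
    | Sum.inl v, Sum.inr u => v = u
    | _, _ => False

/-- A vertex coloring is distinguishing if the only automorphism preserving it is the identity. -/
def IsDistinguishingVertexColoring {V α : Type*} (G : SimpleGraph V) (c : V → α) : Prop :=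
  ∀ φ : G ≃g G, (∀ v, c (φ v) = c v) → ∀ v, φ v = v

/-- A proper vertex coloring assigns different colors to adjacent vertices. -/
def IsProperVertexColoring {V α : Type*} (G : SimpleGraph V) (c : V → α) : Prop :=
  ∀ u v, G.Adj u v → c u ≠ c v

/-- The distinguishing number `D(G)`. -/
noncomputable def distinguishingNumber {V : Type*} (G : SimpleGraph V) : ℕ :=
  sInf {r | ∃ c : V → Fin r, IsDistinguishingVertexColoring G c}

/-- The distinguishing chromatic number `χ_D(G)`. -/
noncomputable def distinguishingChromaticNumber {V : Type*} (G : SimpleGraph V) : ℕ :=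
  sInf {r | ∃ c : V → Fin r,
    IsProperVertexColoring G c ∧ IsDistinguishingVertexColoring G c}

/-- An edge coloring is distinguishing if the only automorphism preserving it is the identity. -/
def IsDistinguishingEdgeColoring {V α : Type*} (G : SimpleGraph V) (c : G.edgeSet → α) : Prop :=
  ∀ φ : G ≃g G, (∀ e, c (φ.mapEdgeSet e) = c e) → ∀ v, φ v = v

/-- A proper edge coloring assigns different colors to distinct edges sharing an endpoint. -/
def IsProperEdgeColoring {V α : Type*} (G : SimpleGraph V) (c : G.edgeSet → α) : Prop :=
  ∀ e f : G.edgeSet, e ≠ f → (∃ v, v ∈ (e : Sym2 V) ∧ v ∈ (f : Sym2 V)) → c e ≠ c f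

/-- The distinguishing index `D'(G)`. -/
noncomputable def distinguishingIndex {V : Type*} (G : SimpleGraph V) : ℕ :=
  sInf {r | ∃ c : G.edgeSet → Fin r, IsDistinguishingEdgeColoring G c}

/-- The distinguishing chromatic index `χ'_D(G)`. -/
noncomputable def distinguishingChromaticIndex {V : Type*} (G : SimpleGraph V) : ℕ :=
  sInf {r | ∃ c : G.edgeSet → Fin r,
    IsProperEdgeColoring G c ∧ IsDistinguishingEdgeColoring G c}

/-- The total distinguishing number `D''(G)`: the least `d` such that there is a (not
necessarily proper) coloring of vertices and edges with `d` colors preserved only by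
the identity automorphism. -/
noncomputable def totalDistinguishingNumber {V : Type*} (G : SimpleGraph V) : ℕ :=
  sInf {d | ∃ (cV : V → Fin d) (cE : G.edgeSet → Fin d),
    ∀ φ : G ≃g G,
      ((∀ v, cV (φ v) = cV v) ∧ (∀ e, cE (φ.mapEdgeSet e) = cE e)) → ∀ v, φ v = v}

theorem aux_nonempty {V : Type*} [Fintype V] (G : SimpleGraph V)
    (hconn : G.Connected) (hcard : 3 ≤ Fintype.card V) (hadj : ∀ v, ∃ w, G.Adj v w) :
    {r | ∃ c : G.edgeSet → Fin r,
      IsProperEdgeColoring G c ∧ IsDistinguishingEdgeColoring G c}.Nonempty := by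
  classical
  refine ⟨Fintype.card G.edgeSet, Fintype.equivFin G.edgeSet, ?_, ?_⟩
  · intro e f hef _ h
    exact hef ((Fintype.equivFin G.edgeSet).injective h)
  · intro φ hφ v
    have key : ∀ a b, G.Adj a b → s(φ a, φ b) = s(a, b) := by
      intro a b hab
      have := (Fintype.equivFin G.edgeSet).injective (hφ ⟨s(a, b), hab⟩)
      exact congrArg Subtype.val this
    by_contra hv
    obtain ⟨u, hu⟩ := hadj v
    have h1 : ∀ w, G.Adj v w → w = φ v := by
      intro w hw
      have := key v w hw
      grind
    have hφu : φ u = v := by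
      have := key v u hu
      have := h1 u hu
      grind
    have huv := h1 u hu
    have hne : u ≠ v := hu.ne.symm
    have h2 : ∀ w, G.Adj u w → w = v := by
      intro w hw
      have := key u w hw
      grind
    have hreach : ∀ w, w = v ∨ w = u := by
      intro w
      obtain ⟨p⟩ := hconn.preconnected w v
      induction p with
      | nil => left; rfl
      | @cons a b c hab p ih =>
        have := ih hv hu h1 hφu huv hne h2
        rcases this with rfl | rfl
        · right; rw [huv]; exact h1 _ hab.symm
        · left; exact h2 _ hab.symm
    have : Finset.univ ⊆ ({v, u} : Finset V) := by
      intro w _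
      simpa using hreach w
    have := (Finset.card_le_card this).trans Finset.card_le_two
    rw [Finset.card_univ] at this
    omega

theorem aux_ll {V : Type*} (G : SimpleGraph V) (u v : V) :
    (endlineGraph G).Adj (Sum.inl u) (Sum.inl v) ↔ G.Adj u v := by
  simp only [endlineGraph, SimpleGraph.fromRel_adj]
  constructor
  · rintro ⟨_, h | h⟩
    · exact h
    · exact h.symm
  · intro h
    exact ⟨fun e => h.ne (Sum.inl.inj e), Or.inl h⟩

theorem aux_lr {V : Type*} (G : SimpleGraph V) (u v : V) :
    (endlineGraph G).Adj (Sum.inl u) (Sum.inr v) ↔ u = v := by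
  simp [endlineGraph, SimpleGraph.fromRel_adj]

theorem aux_rl {V : Type*} (G : SimpleGraph V) (u v : V) :
    (endlineGraph G).Adj (Sum.inr u) (Sum.inl v) ↔ u = v := by
  rw [SimpleGraph.adj_comm, aux_lr, eq_comm]

theorem aux_rr {V : Type*} (G : SimpleGraph V) (u v : V) :
    ¬ (endlineGraph G).Adj (Sum.inr u) (Sum.inr v) := by
  simp [endlineGraph, SimpleGraph.fromRel_adj]

/-- the extended coloring -/
def auxCol {V α : Type*} (c : Sym2 V → α) (m : V → α) (d : α) : Sym2 (V ⊕ V) → α :=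
  Sym2.lift ⟨fun x y => match x, y with
    | Sum.inl u, Sum.inl v => c s(u, v)
    | Sum.inl u, Sum.inr _ => m u
    | Sum.inr _, Sum.inl u => m u
    | Sum.inr _, Sum.inr _ => d, by
      rintro (x | x) (y | y) <;> simp [Sym2.eq_swap]⟩

/-- If `G` is a finite simple connected graph of order `≥ 3` with
`χ'_D(G) ≤ Δ(G) + 1`, then `χ'_D(G⁺) ≤ Δ(G) + 1`. -/
theorem chromaticDistinguishingIndex_endlineGraph_le
    {V : Type*} [Fintype V] [DecidableEq V] (G : SimpleGraph V) [DecidableRel G.Adj]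
    (hconn : G.Connected) (hcard : 3 ≤ Fintype.card V)
    (h : distinguishingChromaticIndex G ≤ G.maxDegree + 1) :
    distinguishingChromaticIndex (endlineGraph G) ≤ G.maxDegree + 1 := by
  classical
  have hnt : Nontrivial V := Fintype.one_lt_card_iff_nontrivial.1 (by omega)
  have hadj : ∀ v, ∃ w, G.Adj v w := fun v => by
    have := hconn.preconnected.degree_pos_of_nontrivial v
    exact (G.degree_pos_iff_exists_adj v).1 this
  obtain ⟨c, hc1, hc2⟩ := Nat.sInf_mem (aux_nonempty G hconn hcard hadj)
  change distinguishingChromaticIndex G ≤ _ at h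
  let c' : Sym2 V → Fin (G.maxDegree + 1) := fun e =>
    if he : e ∈ G.edgeSet then Fin.castLE h (c ⟨e, he⟩) else 0
  have hc'eq : ∀ e (he : e ∈ G.edgeSet), c' e = Fin.castLE h (c ⟨e, he⟩) := by
    intro e he
    simp only [c', dif_pos he]
  have hprop : ∀ u v w, G.Adj u v → G.Adj u w → c' s(u, v) = c' s(u, w) → v = w := by
    intro u v w huv huw hc
    rw [hc'eq _ huv, hc'eq _ huw] at hc
    have hc := Fin.castLE_injective h hc
    by_contra hvw
    refine hc1 ⟨s(u, v), huv⟩ ⟨s(u, w), huw⟩ ?_ ⟨u, by simp, by simp⟩ hc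
    intro he
    have : s(u, v) = s(u, w) := congrArg Subtype.val he
    exact hvw (Sym2.congr_right.1 this)
  have hmiss : ∀ v, ∃ k : Fin (G.maxDegree + 1), ∀ w, G.Adj v w → c' s(v, w) ≠ k := by
    intro v
    by_contra! hcon
    have hs : Finset.univ ⊆ (G.neighborFinset v).image (fun w => c' s(v, w)) := by
      intro k _
      obtain ⟨w, hw, hk⟩ := hcon k
      exact Finset.mem_image.2 ⟨w, by simpa using hw, hk⟩
    have h1 := (Finset.card_le_card hs).trans Finset.card_image_le
    rw [Finset.card_univ, Fintype.card_fin, SimpleGraph.card_neighborFinset_eq_degree] at h1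
    have := G.degree_le_maxDegree v
    omega
  choose m hm using hmiss
  apply Nat.sInf_le
  refine ⟨fun e => auxCol c' m 0 e.1, ?_, ?_⟩
  · rintro ⟨e, he⟩ ⟨f, hf⟩ hef ⟨x, hxe, hxf⟩ hcol
    obtain ⟨y, rfl⟩ := Sym2.mem_iff_exists.1 hxe
    obtain ⟨z, rfl⟩ := Sym2.mem_iff_exists.1 hxf
    rw [SimpleGraph.mem_edgeSet] at he hf
    apply hef
    have : y = z := by
      rcases x with x | x <;> rcases y with y | y <;> rcases z with z | z <;>
        simp only [aux_ll, aux_lr, aux_rl, aux_rr] at he hf <;>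
        simp only [auxCol, Sym2.lift_mk] at hcol
      · rw [hprop x y z he hf hcol]
      · exact absurd hcol (hm _ _ he)
      · exact absurd hcol.symm (hm _ _ hf)
      · rw [← he, ← hf]
      · rw [← he, ← hf]
    subst this
    rfl
  · intro φ hφ
    have hkey : ∀ a b, (endlineGraph G).Adj a b →
        auxCol c' m 0 s(φ a, φ b) = auxCol c' m 0 s(a, b) := fun a b hab =>
      hφ ⟨s(a, b), hab⟩
    have hl : ∀ ψ : endlineGraph G ≃g endlineGraph G, ∀ v, ∃ w, ψ (Sum.inl v) = Sum.inl w := by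
      intro ψ v
      obtain ⟨w, hw⟩ := hadj v
      have h1 := ψ.map_adj_iff.2 ((aux_ll G v w).2 hw)
      have h2 := ψ.map_adj_iff.2 ((aux_lr G v v).2 rfl)
      rcases hx : ψ (Sum.inl v) with x | x
      · exact ⟨x, rfl⟩
      · exfalso
        rw [hx] at h1 h2
        have : ψ (Sum.inl w) = ψ (Sum.inr v) := by
          rcases hy : ψ (Sum.inl w) with y | y <;> rcases hz : ψ (Sum.inr v) with z | z <;>
            rw [hy] at h1 <;> rw [hz] at h2 <;>
            simp only [aux_rl, aux_rr] at h1 h2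
          rw [← h1, ← h2]
        simpa using ψ.injective this
    choose f hf using hl φ
    choose g hg using hl φ.symm
    have hfg : ∀ v, f (g v) = v := by
      intro v
      apply Sum.inl_injective (β := V)
      rw [← hf, ← hg, RelIso.apply_symm_apply]
    have hgf : ∀ v, g (f v) = v := by
      intro v
      apply Sum.inl_injective (β := V)
      rw [← hg, ← hf, RelIso.symm_apply_apply]
    let θ : G ≃g G := ⟨⟨f, g, hgf, hfg⟩, by
      intro a b
      change G.Adj (f a) (f b) ↔ _
      rw [← aux_ll, ← hf, ← hf, φ.map_adj_iff, aux_ll]⟩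
    have hθ : ∀ v, f v = v := by
      apply hc2 θ
      rintro ⟨e, he⟩
      induction e using Sym2.ind with
      | _ a b =>
      have hab : G.Adj a b := he
      have h1 := hkey _ _ ((aux_ll G a b).2 hab)
      rw [hf, hf] at h1
      simp only [auxCol, Sym2.lift_mk] at h1
      have hab' : G.Adj (f a) (f b) := θ.map_adj_iff.2 hab
      rw [hc'eq _ hab', hc'eq _ hab] at h1
      exact Fin.castLE_injective h h1
    rintro (v | v)
    · rw [hf, hθ]
    · have h2 := φ.map_adj_iff.2 ((aux_lr G v v).2 rfl)
      rw [hf, hθ] at h2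
      rcases hz : φ (Sum.inr v) with z | z
      · have : φ (Sum.inl z) = φ (Sum.inr v) := by rw [hf, hθ, hz]
        simpa using φ.injective this
      · rw [hz, aux_lr] at h2
        rw [h2]
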